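/- Let m ≥ 3 be an odd integer. Then for all but finitely many odd primes p, neither 2^{(p−1)/2}·(1 + √(1 − 2m^p)) nor −2^{(p−1)/2}·(1 + √(1 − 2m^p)) is a p-th power of an element of the ring of integers of the imaginary quadratic field K_p = ℚ(√(1 − 2m^p)). That is, the set of odd primes p for which there exists β in the ring of integers of K_p with β^p = ±2^{(p−1)/2}·(1 + √(1 − 2m^p)) is finite. -/

import Mathlib

open Polynomial NumberField

/-- A fixed choice of complex square root of the integer `d`. -/
noncomputable def sqrtC (d : ℤ) : ℂ := (d : ℂ) ^ ((1 : ℂ) / 2)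

lemma sqrtC_sq (d : ℤ) : sqrtC d ^ 2 = (d : ℂ) := by
  unfold sqrtC
  rcases eq_or_ne (d : ℂ) 0 with h | h
  · rw [h, Complex.zero_cpow (by norm_num : (1 : ℂ) / 2 ≠ 0)]
    simp
  · rw [pow_two, ← Complex.cpow_add _ _ h]
    norm_num

lemma isIntegral_sqrtC (d : ℤ) : IsIntegral ℚ (sqrtC d) := by
  refine ⟨X ^ 2 - C (d : ℚ), monic_X_pow_sub_C _ two_ne_zero, ?_⟩
  have : (Polynomial.aeval (sqrtC d)) (X ^ 2 - C (d : ℚ)) = 0 := by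
    simp [sqrtC_sq]
  simpa [Polynomial.aeval_def] using this

/-- The (number) field `ℚ(√d)`, realized as a subfield of `ℂ`. -/
noncomputable def Qsqrt (d : ℤ) : IntermediateField ℚ ℂ :=
  IntermediateField.adjoin ℚ {sqrtC d}

instance (d : ℤ) : FiniteDimensional ℚ (Qsqrt d) :=
  IntermediateField.adjoin.finiteDimensional (isIntegral_sqrtC d)

instance (d : ℤ) : NumberField (Qsqrt d) := ⟨⟩

/-- The element `√d` of `ℚ(√d)`. -/
noncomputable def sqrtElem (d : ℤ) : Qsqrt d :=
  ⟨sqrtC d, IntermediateField.mem_adjoin_simple_self ℚ (sqrtC d)⟩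

/-!
Suppose `β ^ n = ±2 ^ k (1 + √D)` with `n = 2 k + 1` and `D = 1 - 2 m ^ n`. Taking absolute values
gives `|β| ^ 2 = 2 m`, so `β` is a root of `X ^ 2 - t X + 2 m` with `t = 2 Re β ∈ ℤ`, and taking
real parts gives `Re (β ^ n) = ±2 ^ k`. If `t` is odd then `2 Re (β ^ n)` is odd, which is absurd.
If `t = 2 a` then `β` corresponds to `w = a + √d ∈ ℤ√d` with `d = a ^ 2 - 2 m`. Since
`w ^ 2 = 2 g` with `g = a ^ 2 - m + a √d`, the real part of `w g ^ k` is `±1`; as it is divisible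
by `a`, this forces `a = ±1`, and conjugation reduces to `a = 1`. For even `m` that real part is
even. For `m = 2 s + 1` we have `g ^ 2 = -(1 + 4 s η)` with `η = 1 - s + √d`, and expanding powers
of `1 + 4 s η` shows that the real part is never `±1`: 2-adically when `k` is even, and modulo
`4 s`, or modulo `20` if `s = 1`, when `k` is odd.
-/

section CommRing

variable {R : Type*} [CommRing R]

lemma dvd_mul_one_add_pow_sub (x z : R) (n : ℕ) : z ∣ x * (1 + z) ^ n - x := by
  have h : z ∣ (1 + z) ^ n - 1 := by simpa using sub_one_dvd_pow_sub_one (1 + z) n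
  simpa [mul_sub] using h.mul_left x

lemma exists_one_add_four_mul_pow_eq (x : R) (v r : ℕ) :
    ∃ y, (1 + 4 * x) ^ (2 ^ v * r) = 1 + 4 * (2 ^ v * r) * x + 2 ^ (v + 3) * x ^ 2 * y := by
  induction v with
  | zero =>
    obtain ⟨y, hy⟩ := powAddExpansion 1 (4 * x) r
    refine ⟨2 * y, ?_⟩
    rw [pow_zero, one_mul, hy]
    simp only [one_pow]
    ring
  | succ v ih =>
    obtain ⟨y, hy⟩ := ih
    refine ⟨y + 2 ^ v * (r + 2 * x * y) ^ 2, ?_⟩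
    rw [pow_succ, mul_right_comm, pow_mul, hy]
    ring

end CommRing

section Zsqrtd

variable {d : ℤ}

lemma isUnit_re_neg_one_pow_mul (r : ℕ) (x : ℤ√d) :
    IsUnit ((-1) ^ r * x).re ↔ IsUnit x.re := by
  rcases neg_one_pow_eq_or (ℤ√d) r with h | h <;> simp [h]

lemma dvd_re_mk_mul_mk_pow (a c : ℤ) (k : ℕ) :
    a ∣ ((⟨a, 1⟩ : ℤ√d) * ⟨c, a⟩ ^ k).re := by
  induction k with
  | zero => simp
  | succ k ih =>
    rw [pow_succ, ← mul_assoc, Zsqrtd.re_mul]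
    exact dvd_add (ih.mul_right _) (Dvd.intro_left _ rfl)

lemma mk_neg_one_mul_mk_neg_pow (c : ℤ) (k : ℕ) :
    (⟨-1, 1⟩ : ℤ√d) * ⟨c, -1⟩ ^ k = -star (⟨1, 1⟩ * ⟨c, 1⟩ ^ k) := by
  rw [star_mul', star_pow, ← neg_mul, Zsqrtd.star_mk, Zsqrtd.star_mk]
  congr 1

lemma sq_mk_one {a m : ℤ} (hd : a ^ 2 - d = 2 * m) :
    (⟨a, 1⟩ : ℤ√d) ^ 2 = 2 * ⟨a ^ 2 - m, a⟩ := by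
  ext
  · simp only [pow_two, Zsqrtd.re_mul, Zsqrtd.re_ofNat, Nat.cast_ofNat, Zsqrtd.im_ofNat]
    linear_combination -hd
  · simp only [pow_two, Zsqrtd.im_mul, Zsqrtd.re_ofNat, Nat.cast_ofNat, Zsqrtd.im_ofNat]
    ring

lemma even_re_mk_one_mul_pow {m : ℤ} (hm : Even m) (hd : 1 - d = 2 * m) {k : ℕ} (hk : k ≠ 0) :
    Even ((⟨1, 1⟩ : ℤ√d) * ⟨1 - m, 1⟩ ^ k).re := by
  obtain ⟨j, rfl⟩ := Nat.exists_eq_succ_of_ne_zero hk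
  obtain ⟨l, rfl⟩ := hm
  have h : (⟨1, 1⟩ : ℤ√d) * ⟨1 - (l + l), 1⟩ = (2 : ℤ) * ⟨1 - 3 * l, 1 - l⟩ := by
    rw [Zsqrtd.smul_val]
    ext
    · simp only [Zsqrtd.re_mul]
      linarith
    · simp only [Zsqrtd.im_mul]
      ring
  rw [pow_succ', ← mul_assoc, h, mul_assoc, Zsqrtd.re_smul]
  exact even_two_mul _

lemma dvd_re_mul_one_add_pow_sub_re {c : ℤ} {z : ℤ√d} (hz : (c : ℤ√d) ∣ z) (x : ℤ√d) (r : ℕ) :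
    c ∣ (x * (1 + z) ^ r).re - x.re :=
  ((Zsqrtd.intCast_dvd _ _).1 (hz.trans (dvd_mul_one_add_pow_sub x z r))).1

lemma exists_re_mul_one_add_four_mul_pow_eq (s : ℤ) (x η : ℤ√d) (v r : ℕ) :
    ∃ X : ℤ, (x * (1 + 4 * (s * η)) ^ (2 ^ v * r)).re =
      x.re + 4 * s * (2 ^ v * r) * (x * η).re + 2 ^ (v + 3) * s ^ 2 * X := by
  obtain ⟨y, hy⟩ := exists_one_add_four_mul_pow_eq (s * η) v r
  have hexpand : x * (1 + 4 * (s * η)) ^ (2 ^ v * r) =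
      x + ((4 * s * (2 ^ v * r) : ℤ) : ℤ√d) * (x * η) +
        ((2 ^ (v + 3) * s ^ 2 : ℤ) : ℤ√d) * (x * η ^ 2 * y) := by
    rw [hy]
    push_cast
    ring
  exact ⟨_, by rw [hexpand, Zsqrtd.re_add, Zsqrtd.re_add, Zsqrtd.re_smul, Zsqrtd.re_smul]⟩

section OddParameter

variable {s : ℤ}

lemma sq_mk_neg_two_mul (hd : d = -(4 * s + 1)) :
    (⟨-2 * s, 1⟩ : ℤ√d) ^ 2 = -(1 + 4 * (s * ⟨1 - s, 1⟩)) := by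
  ext
  · simp only [pow_two, hd, Zsqrtd.smul_val, Zsqrtd.re_mul, Zsqrtd.re_neg, Zsqrtd.re_add,
      Zsqrtd.re_one, Zsqrtd.re_ofNat, Nat.cast_ofNat, Zsqrtd.im_ofNat]
    ring
  · simp only [pow_two, Zsqrtd.smul_val, Zsqrtd.im_mul, Zsqrtd.im_neg, Zsqrtd.im_add,
      Zsqrtd.im_one, Zsqrtd.re_ofNat, Nat.cast_ofNat, Zsqrtd.im_ofNat]
    ring

lemma isUnit_re_mul_pow_two_mul_iff (hd : d = -(4 * s + 1)) (x : ℤ√d) (r : ℕ) :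
    IsUnit (x * ⟨-2 * s, 1⟩ ^ (2 * r)).re ↔
      IsUnit (x * (1 + 4 * (s * ⟨1 - s, 1⟩)) ^ r).re := by
  rw [pow_mul, sq_mk_neg_two_mul hd, neg_pow, mul_left_comm, isUnit_re_neg_one_pow_mul]

lemma not_isUnit_re_mk_one_mul_pow_two_mul (hd : d = -(4 * s + 1)) (hs : s ≠ 0) {r : ℕ}
    (hr : r ≠ 0) : ¬ IsUnit ((⟨1, 1⟩ : ℤ√d) * ⟨-2 * s, 1⟩ ^ (2 * r)).re := by
  rw [isUnit_re_mul_pow_two_mul_iff hd]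
  set w : ℤ√d := ⟨1, 1⟩
  set η : ℤ√d := ⟨1 - s, 1⟩ with hη
  intro hunit
  have hone : (w * (1 + 4 * (s * η)) ^ r).re = 1 := by
    have hdvd : ((4 * s : ℤ) : ℤ√d) ∣ 4 * (s * η) := ⟨η, by push_cast; ring⟩
    obtain ⟨x, hx⟩ := dvd_re_mul_one_add_pow_sub_re hdvd w r
    refine (Int.isUnit_iff.1 hunit).resolve_right fun h => ?_
    rw [h, mul_assoc] at hx
    simp only [w] at hx
    omega
  obtain ⟨v, r', hr', rfl⟩ := Nat.exists_eq_two_pow_mul_odd hr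
  have hwη : (w * η).re = -5 * s := by
    simp only [w, hη, hd, Zsqrtd.re_mul]
    ring
  obtain ⟨X, hX⟩ := exists_re_mul_one_add_four_mul_pow_eq s w η v r'
  have hmul : (4 * s ^ 2 * 2 ^ v) * (2 * X - 5 * r') = 0 := by
    rw [hone, hwη] at hX
    simp only [w] at hX
    linear_combination -hX
  have hzero := (mul_eq_zero.1 hmul).resolve_left (by positivity)
  obtain ⟨q, rfl⟩ := hr'
  omega

lemma not_isUnit_re_mk_one_mul_pow_two_mul_add_one (hd : d = -(4 * s + 1)) (hs : 1 ≤ s)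
    (r : ℕ) :
    ¬ IsUnit ((⟨1, 1⟩ : ℤ√d) * ⟨-2 * s, 1⟩ ^ (2 * r + 1)).re := by
  rw [pow_succ', ← mul_assoc, isUnit_re_mul_pow_two_mul_iff hd]
  set u : ℤ√d := ⟨1, 1⟩ * ⟨-2 * s, 1⟩
  have hu : u.re = -1 - 6 * s := by
    simp only [u, hd, Zsqrtd.re_mul]
    ring
  intro hunit
  have hs1 : s = 1 := by
    have hdvd : ((4 * s : ℤ) : ℤ√d) ∣ 4 * (s * ⟨1 - s, 1⟩) := ⟨⟨1 - s, 1⟩, by push_cast; ring⟩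
    obtain ⟨x, hx⟩ := dvd_re_mul_one_add_pow_sub_re hdvd u r
    rcases Int.isUnit_iff.1 hunit with h | h
    · exact Int.eq_one_of_dvd_one (by omega) ⟨2 * x - 3, by linarith⟩
    · have hmul : s * (2 * x - 3) = 0 := by linarith
      rcases mul_eq_zero.1 hmul with h | h <;> omega
  subst hs1 hd
  obtain ⟨y, hy⟩ := dvd_mul_one_add_pow_sub u (4 * ((1 : ℤ) * ⟨1 - 1, 1⟩)) r
  have hmod : (u * (1 + 4 * ((1 : ℤ) * ⟨1 - 1, 1⟩)) ^ r).re = u.re - 20 * y.im := by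
    have hre := congrArg Zsqrtd.re hy
    rw [Zsqrtd.re_sub] at hre
    have him : (4 * ((1 : ℤ) * ⟨1 - 1, 1⟩) * y).re = -20 * y.im := by simp
    linarith
  rw [hmod, hu, Int.isUnit_iff] at hunit
  omega

end OddParameter

lemma not_isUnit_re_mk_one_mul_pow {m : ℤ} (hm : 2 ≤ m) (hd : 1 - d = 2 * m) {k : ℕ}
    (hk : k ≠ 0) : ¬ IsUnit ((⟨1, 1⟩ : ℤ√d) * ⟨1 - m, 1⟩ ^ k).re := by
  rcases Int.even_or_odd m with hm' | ⟨s, rfl⟩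
  · intro hunit
    have heven := even_re_mk_one_mul_pow hm' hd hk
    rcases Int.isUnit_iff.1 hunit with h | h <;> simp [h] at heven
  · have hd' : d = -(4 * s + 1) := by linarith
    rw [show 1 - (2 * s + 1) = -2 * s by ring]
    obtain ⟨r, rfl | rfl⟩ := Nat.even_or_odd' k
    · exact not_isUnit_re_mk_one_mul_pow_two_mul hd' (by omega) (by omega)
    · exact not_isUnit_re_mk_one_mul_pow_two_mul_add_one hd' (by omega) r

lemma not_isUnit_re_mk_mul_pow {a m : ℤ} (hm : 2 ≤ m) (hd : a ^ 2 - d = 2 * m) {k : ℕ}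
    (hk : k ≠ 0) : ¬ IsUnit ((⟨a, 1⟩ : ℤ√d) * ⟨a ^ 2 - m, a⟩ ^ k).re := by
  intro hunit
  have ha : IsUnit a := isUnit_of_dvd_unit (dvd_re_mk_mul_mk_pow a _ k) hunit
  rcases Int.isUnit_iff.1 ha with rfl | rfl
  · exact not_isUnit_re_mk_one_mul_pow hm (by simpa using hd) hk (by simpa using hunit)
  · rw [mk_neg_one_mul_mk_neg_pow, Zsqrtd.re_neg, IsUnit.neg_iff, Zsqrtd.re_star] at hunit
    exact not_isUnit_re_mk_one_mul_pow hm (by simpa using hd) hk (by simpa using hunit)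

lemma abs_re_mk_one_pow_ne_two_pow {a m : ℤ} (hm : 2 ≤ m) (hd : a ^ 2 - d = 2 * m) {k : ℕ}
    (hk : k ≠ 0) : |((⟨a, 1⟩ : ℤ√d) ^ (2 * k + 1)).re| ≠ 2 ^ k := by
  have hpow : (⟨a, 1⟩ : ℤ√d) ^ (2 * k + 1) =
      ((2 ^ k : ℤ) : ℤ√d) * (⟨a, 1⟩ * ⟨a ^ 2 - m, a⟩ ^ k) := by
    rw [pow_succ', pow_mul, sq_mk_one hd, mul_pow]
    push_cast
    ring
  rw [hpow, Zsqrtd.re_smul, abs_mul, abs_of_pos (by positivity)]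
  intro h
  have habs := mul_left_cancel₀ (by positivity) (h.trans (mul_one _).symm)
  exact not_isUnit_re_mk_mul_pow hm hd hk (Int.isUnit_iff.2 (abs_eq one_pos.le |>.1 habs))

end Zsqrtd

section Complex

variable {b : ℂ} {t N : ℤ}

lemma sq_eq_of_two_mul_re_of_normSq (ht : 2 * b.re = t) (hN : Complex.normSq b = N) :
    b ^ 2 = t * b - N := by
  have htrace : (t : ℂ) = b + starRingEnd ℂ b := by
    rw [Complex.add_conj]
    exact_mod_cast congrArg Complex.ofReal ht.symm
  have hnorm : (N : ℂ) = b * starRingEnd ℂ b := by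
    rw [Complex.mul_conj, hN, Complex.ofReal_intCast]
  rw [htrace, hnorm]
  ring

lemma re_pow_eq_re_mk_one_pow {a : ℤ} (ha : b.re = a) (hN : Complex.normSq b = N) (n : ℕ) :
    (b ^ n).re = ((⟨a, 1⟩ : ℤ√(a ^ 2 - N)) ^ n).re := by
  have hsq : (b - a) * (b - a) = ((a ^ 2 - N : ℤ) : ℂ) := by
    have := sq_eq_of_two_mul_re_of_normSq (t := 2 * a) (by simp [ha]) hN
    push_cast at this ⊢
    linear_combination this
  let φ : ℤ√(a ^ 2 - N) →+* ℂ := Zsqrtd.lift ⟨b - a, hsq⟩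
  have hφ (z : ℤ√(a ^ 2 - N)) : φ z = z.re + z.im * (b - a) := rfl
  have hb : φ ⟨a, 1⟩ = b := by simp [hφ]
  rw [← hb, ← map_pow, hφ]
  simp [ha]

lemma exists_odd_two_mul_re_pow_eq (ht : 2 * b.re = t) (hN : Complex.normSq b = N)
    (htodd : Odd t) (hNeven : Even N) (n : ℕ) :
    ∃ u : ℤ, Odd u ∧ 2 * (b ^ (n + 1)).re = u := by
  have hsq := sq_eq_of_two_mul_re_of_normSq ht hN
  obtain ⟨a, rfl⟩ := htodd
  obtain ⟨l, rfl⟩ := hNeven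
  have hcongr : ∃ x y : ℤ, b ^ (n + 1) = b + 2 * (x + y * b) := by
    induction n with
    | zero => exact ⟨0, 0, by simp⟩
    | succ n ih =>
      obtain ⟨x, y, h⟩ := ih
      refine ⟨-l - 2 * l * y, a + x + (2 * a + 1) * y, ?_⟩
      rw [pow_succ, h]
      push_cast at hsq ⊢
      linear_combination (1 + 2 * y) * hsq
  obtain ⟨x, y, h⟩ := hcongr
  refine ⟨2 * a + 1 + 2 * (2 * x + y * (2 * a + 1)), by simp [parity_simps], ?_⟩
  simp only [h, Complex.add_re, Complex.mul_re, Complex.add_im, Complex.mul_im, Complex.re_ofNat,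
    Complex.im_ofNat, Complex.intCast_re, Complex.intCast_im]
  push_cast at ht ⊢
  linear_combination (1 + 2 * y : ℝ) * ht

lemma abs_re_pow_ne_two_pow {m : ℤ} (hm : 2 ≤ m) (ht : 2 * b.re = t)
    (hN : Complex.normSq b = 2 * m) {k : ℕ} (hk : k ≠ 0) : |(b ^ (2 * k + 1)).re| ≠ 2 ^ k := by
  replace hN : Complex.normSq b = (2 * m : ℤ) := by exact_mod_cast hN
  intro h
  rcases Int.even_or_odd' t with ⟨a, rfl | rfl⟩
  · have ha : b.re = a := by simpa using ht
    rw [re_pow_eq_re_mk_one_pow ha hN] at h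
    exact abs_re_mk_one_pow_ne_two_pow hm (sub_sub_cancel _ _) hk (by exact_mod_cast h)
  · obtain ⟨u, hu, hre⟩ :=
      exists_odd_two_mul_re_pow_eq ht hN (odd_two_mul_add_one a) (even_two_mul m) (2 * k)
    have habs : |u| = 2 * 2 ^ k := by
      have : |(u : ℝ)| = 2 * 2 ^ k := by rw [← hre, abs_mul, h, abs_two]
      exact_mod_cast this
    exact Int.not_even_iff_odd.2 hu (even_abs.1 (habs ▸ even_two_mul _))

lemma exists_int_eq_two_mul_re (hb : IsIntegral ℤ b) {q : ℚ} (hq : b.re = q) :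
    ∃ t : ℤ, 2 * b.re = t := by
  have htrace : IsIntegral ℤ (algebraMap ℚ ℂ (2 * q)) := by
    have := hb.add (hb.map (starRingEnd ℂ).toIntAlgHom)
    simpa [Complex.add_conj, hq] using this
  obtain ⟨t, ht⟩ := IsIntegrallyClosed.isIntegral_iff.1
    ((isIntegral_algebraMap_iff (algebraMap ℚ ℂ).injective).1 htrace)
  refine ⟨t, ?_⟩
  rw [hq]
  exact_mod_cast ht.symm

end Complex

section Qsqrt

variable {d : ℤ}

lemma sqrtC_re (hd : d < 0) : (sqrtC d).re = 0 := by
  have hre := congrArg Complex.re (sqrtC_sq d)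
  have him := congrArg Complex.im (sqrtC_sq d)
  simp only [pow_two, Complex.mul_re, Complex.mul_im, Complex.intCast_re,
    Complex.intCast_im] at hre him
  have hd' : (d : ℝ) < 0 := by exact_mod_cast hd
  rcases mul_eq_zero.1 (by linarith : (sqrtC d).re * (sqrtC d).im = 0) with h | h
  · exact h
  · rw [h] at hre
    nlinarith [mul_self_nonneg (sqrtC d).re]

lemma normSq_one_add_sqrtC (hd : d < 0) : Complex.normSq (1 + sqrtC d) = 1 - d := by
  have hre := congrArg Complex.re (sqrtC_sq d)
  simp only [pow_two, Complex.mul_re, sqrtC_re hd, mul_zero, zero_sub, Complex.intCast_re] at hre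
  simp [Complex.normSq_apply, sqrtC_re hd, ← hre]

lemma exists_rat_add_rat_mul_sqrtC_eq {b : ℂ} (hb : b ∈ Qsqrt d) :
    ∃ x y : ℚ, x + y * sqrtC d = b := by
  rw [Qsqrt, ← IntermediateField.mem_toSubalgebra,
    IntermediateField.adjoin_simple_toSubalgebra_of_isAlgebraic (isIntegral_sqrtC d).isAlgebraic]
    at hb
  induction hb using Algebra.adjoin_induction with
  | mem z hz => exact ⟨0, 1, by simp_all⟩
  | algebraMap q => exact ⟨q, 0, by simp⟩
  | add _ _ _ _ h₁ h₂ =>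
    obtain ⟨x, y, rfl⟩ := h₁
    obtain ⟨x', y', rfl⟩ := h₂
    exact ⟨x + x', y + y', by push_cast; ring⟩
  | mul _ _ _ _ h₁ h₂ =>
    obtain ⟨x, y, rfl⟩ := h₁
    obtain ⟨x', y', rfl⟩ := h₂
    refine ⟨x * x' + y * y' * d, x * y' + x' * y, ?_⟩
    push_cast
    linear_combination -(y * y' : ℂ) * sqrtC_sq d

lemma exists_int_eq_two_mul_re_of_mem_Qsqrt (hd : d < 0) {b : ℂ} (hb : b ∈ Qsqrt d)
    (hint : IsIntegral ℤ b) : ∃ t : ℤ, 2 * b.re = t := by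
  obtain ⟨x, y, rfl⟩ := exists_rat_add_rat_mul_sqrtC_eq hb
  exact exists_int_eq_two_mul_re hint (q := x) (by simp [sqrtC_re hd])

lemma pow_ne_two_pow_mul_one_add_sqrtC {m : ℤ} (hm : 2 ≤ m) {k : ℕ} (hk : k ≠ 0)
    (hd : 1 - d = 2 * m ^ (2 * k + 1)) {b : ℂ} (hb : b ∈ Qsqrt d) (hint : IsIntegral ℤ b) :
    ¬ (b ^ (2 * k + 1) = 2 ^ k * (1 + sqrtC d) ∨ b ^ (2 * k + 1) = -(2 ^ k * (1 + sqrtC d))) := by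
  intro h
  have hmpow : 1 ≤ m ^ (2 * k + 1) := one_le_pow₀ (by omega)
  have hd0 : d < 0 := by omega
  have hc : (2 ^ k * (1 + sqrtC d) : ℂ) = ((2 ^ k : ℝ) : ℂ) * (1 + sqrtC d) := by push_cast; rfl
  have hre : |(b ^ (2 * k + 1)).re| = 2 ^ k := by
    rcases h with h | h <;> simp [h, hc, sqrtC_re hd0, -Complex.ofReal_pow]
  have hN : Complex.normSq b = 2 * m := by
    have hm0 : (0 : ℝ) ≤ 2 * m := by exact_mod_cast (by omega : 0 ≤ 2 * m)
    refine (pow_left_inj₀ (Complex.normSq_nonneg b) hm0 (by omega : 2 * k + 1 ≠ 0)).1 ?_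
    have hd' : (1 - d : ℝ) = 2 * m ^ (2 * k + 1) := by exact_mod_cast hd
    have : Complex.normSq (b ^ (2 * k + 1)) = Complex.normSq (2 ^ k * (1 + sqrtC d)) := by
      rcases h with h | h <;> simp only [h, Complex.normSq_neg]
    rw [← map_pow, this, hc, map_mul, Complex.normSq_ofReal, normSq_one_add_sqrtC hd0, hd']
    ring
  obtain ⟨t, ht⟩ := exists_int_eq_two_mul_re_of_mem_Qsqrt hd0 hb hint
  exact abs_re_pow_ne_two_pow hm ht hN hk hre

end Qsqrt

theorem finitely_many_primes_pth_power_general {m : ℤ} (hm : 2 ≤ m) {n : ℕ} (hn : Odd n)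
    (hn1 : n ≠ 1) (β : 𝓞 (Qsqrt (1 - 2 * m ^ n))) :
    ¬ ((β : Qsqrt (1 - 2 * m ^ n)) ^ n =
          2 ^ ((n - 1) / 2) * (1 + sqrtElem (1 - 2 * m ^ n)) ∨
        (β : Qsqrt (1 - 2 * m ^ n)) ^ n =
          -(2 ^ ((n - 1) / 2) * (1 + sqrtElem (1 - 2 * m ^ n)))) := by
  obtain ⟨k, rfl⟩ := hn
  have hint : IsIntegral ℤ ((β : Qsqrt (1 - 2 * m ^ (2 * k + 1))) : ℂ) :=
    (RingOfIntegers.isIntegral_coe β).map (Qsqrt _).val.toRingHom.toIntAlgHom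
  have := pow_ne_two_pow_mul_one_add_sqrtC hm (k := k) (by omega) (sub_sub_cancel _ _)
    (β : Qsqrt (1 - 2 * m ^ (2 * k + 1))).2 hint
  have htwo : ((2 : Qsqrt (1 - 2 * m ^ (2 * k + 1))) : ℂ) = 2 := rfl
  simpa [Subtype.ext_iff, sqrtElem, htwo] using this

/-- For an odd integer `m ≥ 3`, for all but finitely many odd primes `p`, neither
`2 ^ ((p-1)/2) (1 + √(1 - 2 m ^ p))` nor its negative is a `p`-th power of an element of the
ring of integers of `ℚ(√(1 - 2 m ^ p))`. -/
theorem finitely_many_primes_pth_power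
    (m : ℤ) (hm : 3 ≤ m) (hmodd : Odd m) :
    {p : ℕ | p.Prime ∧ Odd p ∧
      ∃ β : 𝓞 (Qsqrt (1 - 2 * m ^ p)),
        (β : Qsqrt (1 - 2 * m ^ p)) ^ p =
            2 ^ ((p - 1) / 2) * (1 + sqrtElem (1 - 2 * m ^ p)) ∨
        (β : Qsqrt (1 - 2 * m ^ p)) ^ p =
            -(2 ^ ((p - 1) / 2) * (1 + sqrtElem (1 - 2 * m ^ p)))}.Finite := by
  refine Set.finite_empty.subset ?_
  rintro p ⟨hp, hodd, β, hβ⟩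
  exact finitely_many_primes_pth_power_general (by omega) hodd hp.ne_one β hβ
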